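/- Let m ≥ 1 and let (V, f) be a representation of the equioriented quiver of type A_m over ℂ: finite-dimensional ℂ-vector spaces V₁, …, V_m together with linear maps f_i : V_i → V_{i+1} for 1 ≤ i < m. For 1 ≤ a ≤ b ≤ m let I[a,b] denote the interval representation with I[a,b]_i = ℂ for a ≤ i ≤ b and I[a,b]_i = 0 otherwise, whose map ℂ → ℂ is the identity for a ≤ i < b and whose other maps are zero. Then (V, f) is isomorphic, as a representation (i.e. via linear isomorphisms g_i : V_i → W_i satisfying g_{i+1} ∘ f_i = f'_i ∘ g_i), to a finite direct sum of interval representations I[a,b]; in particular every indecomposable finite-dimensional representation of the A_m quiver has dimension vector of the form (0,…,0,1,1,…,1,0,…,0) with the nontrivial linear maps being isomorphisms. -/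

import Mathlib

/-- The space at vertex `i` (1-indexed) of the interval representation `I[a,b]`
of the equioriented `A_m` quiver: `ℂ` for `a ≤ i ≤ b` and `0` otherwise
(realized as the submodules `⊤` resp. `⊥` of `ℂ`). -/
noncomputable def intervalSpace (a b i : ℕ) : Submodule ℂ ℂ :=
  if a ≤ i ∧ i ≤ b then ⊤ else ⊥

open Classical in
/-- The structural map `I[a,b]_i → I[a,b]_{i+1}` of the interval representation:
the identity `ℂ → ℂ` for `a ≤ i < b`, and zero otherwise. -/
noncomputable def intervalMap (a b i : ℕ) :
    intervalSpace a b i →ₗ[ℂ] intervalSpace a b (i + 1) :=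
  if h : intervalSpace a b i ≤ intervalSpace a b (i + 1) then Submodule.inclusion h else 0

/-!
Unless `V = 0`, let `a` be the first vertex with `V a ≠ 0` and push a nonzero vector of `V a`
forward until it dies after vertex `b`, which gives a copy of `I[a,b]` inside `V`. A functional
that is nonzero on the last surviving vector pulls back to functionals on `V a, …, V b`; since
nothing nonzero maps into `V a`, they assemble into a retraction of `V` onto that copy, whose
kernel is a complement of smaller total dimension.
-/

section IntervalModule

variable (K : Type*) [Semiring K]

/-- The space at vertex `i` (1-indexed) of the interval representation `I[a,b]` over `K`;
`intervalSpace` unfolds to the case `K = ℂ`. -/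
def intervalModule (a b i : ℕ) : Submodule K K :=
  if a ≤ i ∧ i ≤ b then ⊤ else ⊥

open Classical in
/-- The map from vertex `i` to vertex `i + 1` of the interval representation `I[a,b]` over `K`. -/
noncomputable def intervalModuleMap (a b i : ℕ) :
    intervalModule K a b i →ₗ[K] intervalModule K a b (i + 1) :=
  if h : intervalModule K a b i ≤ intervalModule K a b (i + 1) then Submodule.inclusion h else 0

variable {K} {a b i : ℕ}

theorem mem_intervalModule {c : K} :
    c ∈ intervalModule K a b i ↔ (¬(a ≤ i ∧ i ≤ b) → c = 0) := by
  unfold intervalModule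
  split_ifs with h <;> simp [h]

theorem coe_intervalModuleMap (c : intervalModule K a b i) :
    (intervalModuleMap K a b i c : K) = if i < b then (c : K) else 0 := by
  split_ifs with hib
  · have hle : intervalModule K a b i ≤ intervalModule K a b (i + 1) := fun x hx ↦
      mem_intervalModule.2 fun h ↦ mem_intervalModule.1 hx (by omega)
    rw [intervalModuleMap, dif_pos hle, Submodule.coe_inclusion]
  · exact mem_intervalModule.1 (intervalModuleMap K a b i c).2 (by omega)

end IntervalModule

section Splitting

variable {K M N : Type*} [Ring K] [AddCommGroup M] [Module K M] [AddCommGroup N] [Module K N]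

/-- The splitting `M ≃ N × ker p`, `x ↦ (p x, x - s (p x))`, given by a section `s` of `p`. -/
def equivProdKerOfRightInverse (p : M →ₗ[K] N) (s : N →ₗ[K] M)
    (hps : Function.RightInverse s p) : M ≃ₗ[K] N × LinearMap.ker p where
  toLinearMap := p.prod ((LinearMap.id - s ∘ₗ p).codRestrict (LinearMap.ker p) fun x ↦ by
    simp [hps (p x)])
  invFun y := s y.1 + y.2
  left_inv x := by simp
  right_inv y := by
    have hy : p y.2 = 0 := y.2.2
    ext <;> simp [hps y.1, hy]

end Splitting

section Retraction

variable {K : Type*} [Ring K] {m : ℕ} {V : Fin m → Type*} [∀ i, AddCommGroup (V i)]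
  [∀ i, Module K (V i)]

/-- The representation with maps `f i : V i → V (i + 1)` is isomorphic to a finite direct sum of
interval representations. The vertices are 1-indexed in `I[a,b]`, so `i : Fin m` is the vertex
`i + 1`. -/
def IsIntervalDecomposable
    (f : ∀ (i : Fin m) (h : (i : ℕ) + 1 < m), V i →ₗ[K] V ⟨(i : ℕ) + 1, h⟩) : Prop :=
  ∃ (n : ℕ) (a b : Fin n → ℕ), (∀ k, 1 ≤ a k ∧ a k ≤ b k ∧ b k ≤ m) ∧
    ∃ g : ∀ i : Fin m, V i ≃ₗ[K] (∀ k : Fin n, intervalModule K (a k) (b k) ((i : ℕ) + 1)),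
      ∀ (i : Fin m) (h : (i : ℕ) + 1 < m) (v : V i) (k : Fin n),
        g ⟨(i : ℕ) + 1, h⟩ (f i h v) k
          = intervalModuleMap K (a k) (b k) ((i : ℕ) + 1) (g i v k)

variable {f : ∀ (i : Fin m) (h : (i : ℕ) + 1 < m), V i →ₗ[K] V ⟨(i : ℕ) + 1, h⟩}

theorem IsIntervalDecomposable.of_subsingleton [∀ i, Subsingleton (V i)] :
    IsIntervalDecomposable f :=
  ⟨0, Fin.elim0, Fin.elim0, fun k ↦ k.elim0, fun _ ↦ 0, fun _ _ _ k ↦ k.elim0⟩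

/-- A retraction of a representation onto a copy of the interval representation `I[a,b]`: morphisms
of representations `proj : V → I[a,b]` and `incl : I[a,b] → V` with `proj ∘ incl = id`. -/
structure IntervalRetraction
    (f : ∀ (i : Fin m) (h : (i : ℕ) + 1 < m), V i →ₗ[K] V ⟨(i : ℕ) + 1, h⟩) (a b : ℕ) where
  proj : ∀ i : Fin m, V i →ₗ[K] intervalModule K a b ((i : ℕ) + 1)
  incl : ∀ i : Fin m, intervalModule K a b ((i : ℕ) + 1) →ₗ[K] V i
  proj_map : ∀ (i : Fin m) (h : (i : ℕ) + 1 < m) (x : V i),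
    proj ⟨(i : ℕ) + 1, h⟩ (f i h x) = intervalModuleMap K a b ((i : ℕ) + 1) (proj i x)
  map_incl : ∀ (i : Fin m) (h : (i : ℕ) + 1 < m) (c : intervalModule K a b ((i : ℕ) + 1)),
    f i h (incl i c) = incl ⟨(i : ℕ) + 1, h⟩ (intervalModuleMap K a b ((i : ℕ) + 1) c)
  proj_incl : ∀ i, Function.RightInverse (incl i) (proj i)

namespace IntervalRetraction

variable {a b : ℕ} (r : IntervalRetraction f a b)

/-- The structural maps of the kernel of a retraction, as a subrepresentation of `V`. -/
def kerMap (i : Fin m) (h : (i : ℕ) + 1 < m) :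
    LinearMap.ker (r.proj i) →ₗ[K] LinearMap.ker (r.proj ⟨(i : ℕ) + 1, h⟩) :=
  (f i h).restrict fun x hx ↦ by
    rw [LinearMap.mem_ker] at hx ⊢
    rw [r.proj_map, hx, map_zero]

theorem isIntervalDecomposable (hab : 1 ≤ a ∧ a ≤ b ∧ b ≤ m)
    (hker : IsIntervalDecomposable r.kerMap) : IsIntervalDecomposable f := by
  obtain ⟨n, a', b', hab', g, hg⟩ := hker
  let split (i : Fin m) := equivProdKerOfRightInverse (r.proj i) (r.incl i) (r.proj_incl i)
  have split_snd_map (i : Fin m) (h : (i : ℕ) + 1 < m) (x : V i) :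
      (split ⟨(i : ℕ) + 1, h⟩ (f i h x)).2 = r.kerMap i h (split i x).2 := by
    apply Subtype.ext
    change f i h x - r.incl _ (r.proj _ (f i h x)) = f i h (x - r.incl i (r.proj i x))
    rw [map_sub, r.map_incl, r.proj_map]
  refine ⟨n + 1, Fin.cons a a', Fin.cons b b', Fin.cases hab hab', fun i ↦
    (split i ≪≫ₗ (LinearEquiv.refl K _).prodCongr (g i)) ≪≫ₗ Fin.consLinearEquiv K fun k ↦
      intervalModule K ((Fin.cons a a' : Fin (n + 1) → ℕ) k) ((Fin.cons b b' : Fin (n + 1) → ℕ) k)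
        ((i : ℕ) + 1), ?_⟩
  intro i h x k
  cases k using Fin.cases with
  | zero => exact r.proj_map i h x
  | succ k => exact (congrArg (g _ · k) (split_snd_map i h x)).trans (hg i h _ k)

end IntervalRetraction

end Retraction

section DualChain

variable {K : Type*} [Ring K] {m : ℕ} {V : Fin m → Type*} [∀ i, AddCommGroup (V i)]
  [∀ i, Module K (V i)]
  {f : ∀ (i : Fin m) (h : (i : ℕ) + 1 < m), V i →ₗ[K] V ⟨(i : ℕ) + 1, h⟩}

/-- The orbit of a vector of `V a` that survives exactly up to vertex `b`, together with compatible
functionals, supported on `[a,b]`, that take the value `1` on it. The components `vec i` with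
`i < a` are irrelevant. -/
structure DualChain
    (f : ∀ (i : Fin m) (h : (i : ℕ) + 1 < m), V i →ₗ[K] V ⟨(i : ℕ) + 1, h⟩) (a b : Fin m) where
  vec : ∀ i, V i
  dual : ∀ i, V i →ₗ[K] K
  map_vec : ∀ (i : Fin m) (h : (i : ℕ) + 1 < m), a ≤ i → f i h (vec i) = vec ⟨(i : ℕ) + 1, h⟩
  vec_eq_zero : ∀ i, b < i → vec i = 0
  dual_map : ∀ (i : Fin m) (h : (i : ℕ) + 1 < m) (x : V i), a ≤ i → i < b →
    dual ⟨(i : ℕ) + 1, h⟩ (f i h x) = dual i x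
  dual_eq_zero : ∀ i, ¬(a ≤ i ∧ i ≤ b) → dual i = 0
  dual_vec : ∀ i, a ≤ i → i ≤ b → dual i (vec i) = 1

namespace DualChain

/-- The chain consisting of a single vector killed by the next map. -/
def single {a : Fin m} {v : V a} (φ : V a →ₗ[K] K) (hφ : φ v = 1) (hv : ∀ h, f a h v = 0) :
    DualChain f a a where
  vec := Pi.single a v
  dual := Pi.single (M := fun i ↦ V i →ₗ[K] K) a φ
  map_vec i h hai := by
    have hne : (⟨(i : ℕ) + 1, h⟩ : Fin m) ≠ a := by grind
    rw [Pi.single_eq_of_ne hne]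
    rcases eq_or_ne i a with rfl | hia
    · rw [Pi.single_eq_same, hv]
    · rw [Pi.single_eq_of_ne hia, map_zero]
  vec_eq_zero i hi := Pi.single_eq_of_ne hi.ne' v
  dual_map i h x hai hia := absurd hai hia.not_ge
  dual_eq_zero i hi := Pi.single_eq_of_ne (M := fun i ↦ V i →ₗ[K] K) (by omega) φ
  dual_vec i hai hia := by
    obtain rfl := le_antisymm hai hia
    simpa using hφ

/-- Extends a chain starting at `a + 1` by a preimage `v` of its first vector. -/
def cons {a b : Fin m} {ha : (a : ℕ) + 1 < m} (c : DualChain f ⟨(a : ℕ) + 1, ha⟩ b)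
    (hab : ⟨(a : ℕ) + 1, ha⟩ ≤ b) (v : V a) (hv : f a ha v = c.vec ⟨(a : ℕ) + 1, ha⟩) :
    DualChain f a b where
  vec := Function.update c.vec a v
  dual := Function.update c.dual a (c.dual ⟨(a : ℕ) + 1, ha⟩ ∘ₗ f a ha)
  map_vec i h hai := by
    have hne : (⟨(i : ℕ) + 1, h⟩ : Fin m) ≠ a := by grind
    rw [Function.update_of_ne hne]
    rcases eq_or_ne i a with rfl | hia
    · rw [Function.update_self, hv]
    · rw [Function.update_of_ne hia, c.map_vec i h (by grind)]
  vec_eq_zero i hi := by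
    rw [Function.update_of_ne (by grind), c.vec_eq_zero i hi]
  dual_map i h x hai hib := by
    have hne : (⟨(i : ℕ) + 1, h⟩ : Fin m) ≠ a := by grind
    rw [Function.update_of_ne hne]
    rcases eq_or_ne i a with rfl | hia
    · rw [Function.update_self, LinearMap.comp_apply]
    · rw [Function.update_of_ne hia, c.dual_map i h x (by grind) hib]
  dual_eq_zero i hi := by
    rw [Function.update_of_ne (by grind), c.dual_eq_zero i (by grind)]
  dual_vec i hai hib := by
    rcases eq_or_ne i a with rfl | hia
    · simp only [Function.update_self, LinearMap.comp_apply, hv, c.dual_vec _ le_rfl hab]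
    · rw [Function.update_of_ne hia, Function.update_of_ne hia, c.dual_vec i (by grind) hib]

variable {a b : Fin m}

theorem ker_dual_lt_top [Nontrivial K] (c : DualChain f a b) (hab : a ≤ b) :
    LinearMap.ker (c.dual a) < ⊤ :=
  lt_top_iff_ne_top.2 fun htop ↦ by
    have hzero : c.dual a (c.vec a) = 0 := LinearMap.mem_ker.1 (htop ▸ Submodule.mem_top)
    exact one_ne_zero ((c.dual_vec a le_rfl hab).symm.trans hzero)

/-- The retraction of `V` onto the copy of `I[a + 1, b + 1]` spanned by a chain that starts at the
first nonzero vertex. -/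
def toIntervalRetraction (c : DualChain f a b) (ha : ∀ i < a, Subsingleton (V i)) :
    IntervalRetraction f ((a : ℕ) + 1) ((b : ℕ) + 1) where
  proj i := (c.dual i).codRestrict _ fun x ↦ mem_intervalModule.2 fun hi ↦ by
    rw [c.dual_eq_zero i (by omega), LinearMap.zero_apply]
  incl i := LinearMap.toSpanSingleton K (V i) (c.vec i) ∘ₗ Submodule.subtype _
  proj_map i h x := by
    apply Subtype.ext
    simp only [coe_intervalModuleMap, LinearMap.codRestrict_apply, add_lt_add_iff_right,
      Fin.val_fin_lt]
    rcases lt_or_ge i a with hia | hai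
    · have := ha i hia
      simp [Subsingleton.elim x 0]
    split_ifs with hib
    · exact c.dual_map i h x hai hib
    · rw [c.dual_eq_zero _ (by grind), LinearMap.zero_apply]
  map_incl i h x := by
    simp only [LinearMap.comp_apply, Submodule.subtype_apply, LinearMap.toSpanSingleton_apply,
      coe_intervalModuleMap, map_smul, add_lt_add_iff_right, Fin.val_fin_lt]
    rcases lt_or_ge i a with hia | hai
    · have hx : (x : K) = 0 := mem_intervalModule.1 x.2 (by omega)
      simp [hx]
    rw [c.map_vec i h hai]
    split_ifs with hib
    · rfl
    · rw [c.vec_eq_zero _ (by grind), smul_zero, smul_zero]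
  proj_incl i x := by
    apply Subtype.ext
    change c.dual i ((x : K) • c.vec i) = x
    rw [map_smul, smul_eq_mul]
    by_cases hi : a ≤ i ∧ i ≤ b
    · rw [c.dual_vec i hi.1 hi.2, mul_one]
    · have hx : (x : K) = 0 := mem_intervalModule.1 x.2 (by omega)
      rw [hx, zero_mul]

end DualChain

end DualChain

section DivisionRing

variable {K : Type*} [DivisionRing K]

theorem exists_linearMap_apply_eq_one {M : Type*} [AddCommGroup M] [Module K M] {v : M}
    (hv : v ≠ 0) : ∃ φ : M →ₗ[K] K, φ v = 1 := by
  obtain ⟨ψ, hψ⟩ := Module.Projective.exists_dual_ne_zero K hv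
  -- As `K` may be noncommutative, `ψ` is normalized by a right multiplication.
  exact ⟨LinearMap.toSpanSingleton K K (ψ v)⁻¹ ∘ₗ ψ, by simp [hψ]⟩

variable {m : ℕ} {V : Fin m → Type*} [∀ i, AddCommGroup (V i)] [∀ i, Module K (V i)]
  {f : ∀ (i : Fin m) (h : (i : ℕ) + 1 < m), V i →ₗ[K] V ⟨(i : ℕ) + 1, h⟩}

theorem DualChain.exists_vec_eq_of_ne_zero {a : Fin m} {v : V a} (hv : v ≠ 0) :
    ∃ b, a ≤ b ∧ ∃ c : DualChain f a b, c.vec a = v := by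
  by_cases hdies : ∀ h, f a h v = 0
  · obtain ⟨φ, hφ⟩ := exists_linearMap_apply_eq_one (K := K) hv
    exact ⟨a, le_rfl, DualChain.single φ hφ hdies, Pi.single_eq_same a v⟩
  · push Not at hdies
    obtain ⟨ha, hfv⟩ := hdies
    obtain ⟨b, hab, c, hc⟩ := exists_vec_eq_of_ne_zero hfv
    exact ⟨b, Fin.le_def.2 (Nat.le_of_succ_le hab),
      c.cons hab v hc.symm, Function.update_self a v c.vec⟩
termination_by m - (a : ℕ)
decreasing_by exact Nat.sub_lt_sub_left a.isLt (Nat.lt_succ_self a)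

end DivisionRing

theorem rep_of_Am_quiver_iso_direct_sum_of_intervals_general {K : Type*} [DivisionRing K] {m : ℕ}
    {V : Fin m → Type*} [∀ i, AddCommGroup (V i)] [∀ i, Module K (V i)]
    [∀ i, FiniteDimensional K (V i)]
    (f : ∀ (i : Fin m) (h : (i : ℕ) + 1 < m), V i →ₗ[K] V ⟨(i : ℕ) + 1, h⟩) :
    IsIntervalDecomposable f := by
  by_cases hzero : ∀ i, Subsingleton (V i)
  · exact .of_subsingleton
  simp only [not_forall, not_subsingleton_iff_nontrivial] at hzero
  obtain ⟨a, (_ : Nontrivial (V a)), hmin⟩ :=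
    wellFounded_lt.has_min {i | Nontrivial (V i)} hzero
  have hbelow (i : Fin m) (hi : i < a) : Subsingleton (V i) :=
    not_nontrivial_iff_subsingleton.1 fun hV ↦ hmin i hV hi
  obtain ⟨v, hv⟩ := exists_ne (0 : V a)
  obtain ⟨b, hab, c, -⟩ := DualChain.exists_vec_eq_of_ne_zero (f := f) hv
  let r := c.toIntervalRetraction hbelow
  have hdim : ∑ i, Module.finrank K (LinearMap.ker (r.proj i)) < ∑ i, Module.finrank K (V i) := by
    refine Finset.sum_lt_sum (fun i _ ↦ Submodule.finrank_le _) ⟨a, Finset.mem_univ a, ?_⟩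
    have hker : LinearMap.ker (r.proj a) = LinearMap.ker (c.dual a) := LinearMap.ker_codRestrict ..
    exact Submodule.finrank_lt (hker ▸ (c.ker_dual_lt_top hab).ne)
  exact r.isIntervalDecomposable (by omega)
    (rep_of_Am_quiver_iso_direct_sum_of_intervals_general r.kerMap)
termination_by ∑ i, Module.finrank K (V i)
decreasing_by exact hdim

/-- Theorem 6.3 (Gabriel): every finite-dimensional representation of the equioriented
quiver of type `A_m` over `ℂ` is isomorphic, as a representation, to a finite direct sum
of interval representations `I[a,b]` with `1 ≤ a ≤ b ≤ m`. -/
theorem rep_of_Am_quiver_iso_direct_sum_of_intervals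
    (m : ℕ) (hm : 1 ≤ m) (V : Fin m → Type*)
    [∀ i, AddCommGroup (V i)] [∀ i, Module ℂ (V i)] [∀ i, FiniteDimensional ℂ (V i)]
    (f : ∀ (i : Fin m) (h : (i : ℕ) + 1 < m), V i →ₗ[ℂ] V ⟨(i : ℕ) + 1, h⟩) :
    ∃ (n : ℕ) (a b : Fin n → ℕ), (∀ k, 1 ≤ a k ∧ a k ≤ b k ∧ b k ≤ m) ∧
      ∃ g : ∀ i : Fin m, V i ≃ₗ[ℂ] (∀ k : Fin n, intervalSpace (a k) (b k) ((i : ℕ) + 1)),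
        ∀ (i : Fin m) (h : (i : ℕ) + 1 < m) (v : V i) (k : Fin n),
          g ⟨(i : ℕ) + 1, h⟩ (f i h v) k
            = intervalMap (a k) (b k) ((i : ℕ) + 1) (g i v k) :=
  rep_of_Am_quiver_iso_direct_sum_of_intervals_general f
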